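/- Let $C$ be a symmetric $n \times n$ real matrix. Then $\alpha_{Q_C}^{\mathrm{cop}} \le \alpha_C^{\mathrm{cop}}$, where $\alpha_{Q_C}^{\mathrm{cop}} = \inf\{ Q_C \bullet X : X \text{ symmetric } 2n \times 2n \text{ positive semidefinite},\ X_{ij} \ge 0 \text{ for all } i,j,\ \sum_{i,j} X_{ij} = 1 \}$ with $Q_C = \begin{pmatrix} C & -C \\ -C & C \end{pmatrix}$, and $\alpha_C^{\mathrm{cop}} = \inf\{ C \bullet U : U \text{ symmetric } n \times n \text{ positive semidefinite},\ U_{ij} \ge 0 \text{ for all } i,j,\ \sum_{i,j} U_{ij} = 1 \}$. -/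

import Mathlib

open Matrix

/-- A linear functional is bounded below on the nonnegative matrices with total sum one. -/
theorem neg_sum_abs_le_sum_mul {ι : Type*} [Fintype ι] (Q X : Matrix ι ι ℝ)
    (hX : ∀ i j, 0 ≤ X i j) (hsum : ∑ i, ∑ j, X i j = 1) :
    -∑ i, ∑ j, |Q i j| ≤ ∑ i, ∑ j, Q i j * X i j := by
  have hle (i j : ι) : X i j ≤ 1 := by
    rw [← hsum]
    calc X i j ≤ ∑ j, X i j :=
          Finset.single_le_sum (fun j _ => hX i j) (Finset.mem_univ j)
      _ ≤ ∑ i, ∑ j, X i j :=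
          Finset.single_le_sum (f := fun i => ∑ j, X i j)
            (fun i _ => Finset.sum_nonneg fun j _ => hX i j) (Finset.mem_univ i)
  simp only [← Finset.sum_neg_distrib]
  refine Finset.sum_le_sum fun i _ => Finset.sum_le_sum fun j _ => ?_
  nlinarith [neg_abs_le (Q i j), abs_nonneg (Q i j), hX i j, hle i j,
    mul_nonneg (abs_nonneg (Q i j)) (sub_nonneg.2 (hle i j)),
    mul_nonneg (sub_nonneg.2 (neg_abs_le (Q i j))) (hX i j)]

/-- Theorem 2 (first part): `α_{Q_C}^cop ≤ α_C^cop` for every symmetric `C`. -/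
theorem stmt_9 (n : ℕ) (C : Matrix (Fin n) (Fin n) ℝ) (hC : Cᵀ = C) :
    sInf {r : ℝ | ∃ X : Matrix (Fin n ⊕ Fin n) (Fin n ⊕ Fin n) ℝ, Xᵀ = X ∧
        (∀ x : Fin n ⊕ Fin n → ℝ, 0 ≤ x ⬝ᵥ X *ᵥ x) ∧
        (∀ i j, 0 ≤ X i j) ∧ (∑ i, ∑ j, X i j) = 1 ∧
        r = ∑ i, ∑ j, fromBlocks C (-C) (-C) C i j * X i j} ≤
    sInf {r : ℝ | ∃ U : Matrix (Fin n) (Fin n) ℝ, Uᵀ = U ∧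
        (∀ x : Fin n → ℝ, 0 ≤ x ⬝ᵥ U *ᵥ x) ∧
        (∀ i j, 0 ≤ U i j) ∧ (∑ i, ∑ j, U i j) = 1 ∧
        r = ∑ i, ∑ j, C i j * U i j} := by
  rcases n.eq_zero_or_pos with rfl | hn
  · simp
  refine csInf_le_csInf ?_ ?_ ?_
  · refine ⟨-∑ i, ∑ j, |fromBlocks C (-C) (-C) C i j|, ?_⟩
    rintro r ⟨X, -, -, hX, hsum, rfl⟩
    exact neg_sum_abs_le_sum_mul _ X hX hsum
  · let k : Fin n := ⟨0, hn⟩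
    let e : Fin n → ℝ := Pi.single k 1
    refine ⟨_, vecMulVec e e, transpose_vecMulVec e e, fun x => ?_, fun i j => ?_, ?_, rfl⟩
    · rw [vecMulVec_mulVec, dotProduct_smul, dotProduct_comm x e]
      exact mul_self_nonneg (e ⬝ᵥ x)
    · have he : 0 ≤ e := Pi.single_nonneg.2 zero_le_one
      exact mul_nonneg (he i) (he j)
    · simp [vecMulVec_apply, ← Finset.mul_sum, e]
  · rintro r ⟨U, hU, hpsd, hnonneg, hsum, rfl⟩
    refine ⟨fromBlocks U 0 0 0, ?_, fun x => ?_, ?_, ?_, ?_⟩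
    · simp [fromBlocks_transpose, hU]
    · simpa [fromBlocks_mulVec, dotProduct] using hpsd (x ∘ Sum.inl)
    · rintro (i | i) (j | j) <;> simp [hnonneg]
    · simpa using hsum
    · simp
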